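/- arXiv:2401.02381 — 7 statements merged into one kernel-verified Lean document; each statement's English description precedes it below -/
import Mathlib

section
/- If a total cost function is 2-partition ordered minimizable, then for every integer q ≥ 1 it is q-partition ordered minimizable; that is, for every finite multiset Ω of real numbers and every partition P of Ω into q nonempty multisets there exists a pairwise ordered partition P' of Ω whose multiset of part cardinalities equals that of P and which satisfies TC(P') ≤ TC(P). -/
/-- Two multisets of reals are pairwise ordered iff every element of one is
less than or equal to every element of the other. -/
def PairwiseOrdered (A B : Multiset ℝ) : Prop :=
  (∀ a ∈ A, ∀ b ∈ B, a ≤ b) ∨ (∀ a ∈ A, ∀ b ∈ B, b ≤ a)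

/-- A cost function `C` on finite multisets of reals is 2-partition ordered
minimizable iff for every partition of a multiset `Ω = A + B` into two nonempty
multisets there exist pairwise ordered multisets `L`, `R` with `L + R = Ω`,
the same multiset of cardinalities, and no larger total cost. -/
def TwoPartitionOrderedMinimizable (C : Multiset ℝ → ℝ) : Prop :=
  ∀ A B : Multiset ℝ, A ≠ 0 → B ≠ 0 →
    ∃ L R : Multiset ℝ, L + R = A + B ∧ PairwiseOrdered L R ∧
      ({Multiset.card L, Multiset.card R} : Multiset ℕ) =
        {Multiset.card A, Multiset.card B} ∧
      C L + C R ≤ C A + C B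

/-! Two parts that are out of order have overlapping order hulls. If all elements of `Ω` are
distinct, an ordered pair of parts has disjoint hulls, so replacing two parts that are out of order
by an ordered pair strictly decreases the total number of points in the hulls, and repeated
application of the two-part hypothesis ends in an ordered partition. Repeated elements break this
monovariant; they are made distinct by labelling the sorted elements of `Ω` with their positions in
`Fin n`. The monotone map from positions to values transports the two-part hypothesis to labels, and
ordered partitions of the labels back to values. -/

variable {α β M : Type*}

theorem exists_eq_pair_add_of_not_pairwise {r : α → α → Prop} {s : Multiset α}
    (h : ¬ s.Pairwise r) : ∃ a b t, s = {a, b} + t ∧ ¬ r a b := by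
  have hlist : ¬ s.toList.Pairwise r := fun hs => h ⟨s.toList, s.coe_toList.symm, hs⟩
  simp only [List.pairwise_iff_forall_sublist, not_forall] at hlist
  obtain ⟨a, b, hsub, hab⟩ := hlist
  have hle : ({a, b} : Multiset α) ≤ s := by
    simpa only [Multiset.coe_toList] using! Multiset.coe_le.2 hsub.subperm
  obtain ⟨t, rfl⟩ := Multiset.le_iff_exists_add.1 hle
  exact ⟨a, b, t, rfl, hab⟩

theorem sum_map_multisetMap (f : α → β) (Q : Multiset (Multiset α)) :
    (Q.map (Multiset.map f)).sum = Q.sum.map f :=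
  (map_multiset_sum (Multiset.mapAddMonoidHom f) Q).symm

theorem exists_add_eq_of_map_eq_add {f : α → β} {s : Multiset α} {t u : Multiset β}
    (h : s.map f = t + u) : ∃ t' u', t' + u' = s ∧ t'.map f = t ∧ u'.map f = u := by
  rw [← Multiset.rel_eq, Multiset.rel_map_left, Multiset.rel_add_right] at h
  obtain ⟨t', u', ht, hu, rfl⟩ := h
  rw [← Multiset.rel_map_left (r := (· = ·)), Multiset.rel_eq] at ht hu
  exact ⟨t', u', rfl, ht, hu⟩

theorem exists_sum_eq_of_map_eq_sum {f : α → β} {P : Multiset (Multiset β)} {s : Multiset α}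
    (h : s.map f = P.sum) :
    ∃ Q : Multiset (Multiset α), Q.sum = s ∧ Q.map (Multiset.map f) = P := by
  induction P using Multiset.induction_on generalizing s with
  | empty => exact ⟨0, (Multiset.map_eq_zero.1 h).symm, rfl⟩
  | cons X P ih =>
    rw [Multiset.sum_cons] at h
    obtain ⟨X', s', rfl, rfl, hs'⟩ := exists_add_eq_of_map_eq_add h
    obtain ⟨Q, rfl, rfl⟩ := ih hs'
    exact ⟨X' ::ₘ Q, Multiset.sum_cons _ _, Multiset.map_cons _ _ _⟩

theorem sort_map_of_monotone [LinearOrder α] [LinearOrder β] {v : α → β} (hv : Monotone v)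
    (s : Multiset α) : (s.map v).sort (· ≤ ·) = (s.sort (· ≤ ·)).map v := by
  refine List.Perm.eq_of_pairwise' (Multiset.pairwise_sort _ _)
    ((s.pairwise_sort (· ≤ ·)).map v fun _ _ hab => hv hab) ?_
  rw [← Multiset.coe_eq_coe, ← Multiset.map_coe, Multiset.sort_eq, Multiset.sort_eq]

theorem sort_add_of_forall_le [LinearOrder α] {s t : Multiset α}
    (h : ∀ a ∈ s, ∀ b ∈ t, a ≤ b) :
    (s + t).sort (· ≤ ·) = s.sort (· ≤ ·) ++ t.sort (· ≤ ·) := by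
  refine List.Perm.eq_of_pairwise' (Multiset.pairwise_sort _ _)
    (List.pairwise_append.2 ⟨s.pairwise_sort _, t.pairwise_sort _, ?_⟩) ?_
  · simpa only [Multiset.mem_sort] using h
  · rw [← Multiset.coe_eq_coe, ← Multiset.coe_add]
    simp only [Multiset.sort_eq]

theorem exists_monotone_map_univ_eq [LinearOrder α] (s : Multiset α) :
    ∃ (n : ℕ) (v : Fin n → α), Monotone v ∧ (Finset.univ : Finset (Fin n)).val.map v = s :=
  ⟨_, (s.sort (· ≤ ·)).get, (s.pairwise_sort (· ≤ ·)).sortedLE.monotone_get, by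
    rw [Fin.univ_val_map, List.ofFn_get, Multiset.sort_eq]⟩

/-- `PairwiseOrdered` over an arbitrary order: one of the two multisets lies entirely below the
other. -/
def OrderedPair [LE α] (A B : Multiset α) : Prop :=
  (∀ a ∈ A, ∀ b ∈ B, a ≤ b) ∨ (∀ a ∈ A, ∀ b ∈ B, b ≤ a)

namespace OrderedPair

theorem symm [LE α] {A B : Multiset α} (h : OrderedPair A B) : OrderedPair B A :=
  (Or.symm h).imp (fun h b hb a ha => h a ha b hb) fun h b hb a ha => h a ha b hb

theorem zero_left [LE α] (B : Multiset α) : OrderedPair 0 B :=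
  .inl fun _ ha => absurd ha (Multiset.notMem_zero _)

theorem map [Preorder α] [Preorder β] {v : α → β} (hv : Monotone v) {A B : Multiset α}
    (h : OrderedPair A B) : OrderedPair (A.map v) (B.map v) := by
  simp only [OrderedPair, Multiset.forall_mem_map_iff]
  exact h.imp (fun h a ha b hb => hv (h a ha b hb)) fun h a ha b hb => hv (h a ha b hb)

end OrderedPair

theorem exists_forall_le_of_add_eq_map [LinearOrder α] [LinearOrder β] {v : α → β}
    (hv : Monotone v) {s : Multiset α} {L R : Multiset β} (hsum : L + R = s.map v)
    (hle : ∀ a ∈ L, ∀ b ∈ R, a ≤ b) :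
    ∃ L' R', L' + R' = s ∧ L'.map v = L ∧ R'.map v = R ∧ ∀ a ∈ L', ∀ b ∈ R', a ≤ b := by
  have hsort : (s.sort (· ≤ ·)).map v = L.sort (· ≤ ·) ++ R.sort (· ≤ ·) := by
    rw [← sort_map_of_monotone hv, ← hsum, sort_add_of_forall_le hle]
  obtain ⟨l, r, hlr, hl, hr⟩ := List.map_eq_append_iff.1 hsort
  have hsorted : (l ++ r).Pairwise (· ≤ ·) := hlr ▸ s.pairwise_sort (· ≤ ·)
  refine ⟨l, r, ?_, ?_, ?_, (List.pairwise_append.1 hsorted).2.2⟩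
  · rw [Multiset.coe_add, ← hlr, Multiset.sort_eq]
  · rw [Multiset.map_coe, hl, Multiset.sort_eq]
  · rw [Multiset.map_coe, hr, Multiset.sort_eq]

theorem OrderedPair.exists_lift [LinearOrder α] [LinearOrder β] {v : α → β} (hv : Monotone v)
    {s : Multiset α} {L R : Multiset β} (hsum : L + R = s.map v) (hLR : OrderedPair L R) :
    ∃ L' R', L' + R' = s ∧ L'.map v = L ∧ R'.map v = R ∧ OrderedPair L' R' := by
  rcases hLR with hle | hge
  · obtain ⟨L', R', hs, hL, hR, hle'⟩ := exists_forall_le_of_add_eq_map hv hsum hle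
    exact ⟨L', R', hs, hL, hR, .inl hle'⟩
  · obtain ⟨R', L', hs, hR, hL, hle'⟩ := exists_forall_le_of_add_eq_map hv
      ((add_comm R L).trans hsum) fun b hb a ha => hge a ha b hb
    exact ⟨L', R', (add_comm L' R').trans hs, hL, hR, OrderedPair.symm (.inl hle')⟩

section OrderHull

/-- The order-convex hull of a multiset: all points lying between two of its elements. The total
size of the hulls of the parts is the monovariant of the reordering process. -/
def orderHull [LE α] (A : Multiset α) : Set α :=
  {x | (∃ a ∈ A, a ≤ x) ∧ ∃ b ∈ A, x ≤ b}

theorem orderHull_mono [LE α] {A B : Multiset α} (h : A ≤ B) : orderHull A ⊆ orderHull B :=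
  fun _ ⟨⟨a, ha, hax⟩, b, hb, hxb⟩ =>
    ⟨⟨a, Multiset.mem_of_le h ha, hax⟩, b, Multiset.mem_of_le h hb, hxb⟩

theorem disjoint_orderHull_of_forall_le [PartialOrder α] {L R : Multiset α} (hd : Disjoint L R)
    (h : ∀ a ∈ L, ∀ b ∈ R, a ≤ b) : Disjoint (orderHull L) (orderHull R) := by
  rw [Set.disjoint_left]
  rintro x ⟨-, a, ha, hxa⟩ ⟨⟨b, hb, hbx⟩, -⟩
  obtain rfl : a = b := (h a ha b hb).antisymm (hbx.trans hxa)
  exact Multiset.disjoint_left.1 hd ha hb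

theorem OrderedPair.disjoint_orderHull [PartialOrder α] {L R : Multiset α} (h : OrderedPair L R)
    (hd : Disjoint L R) : Disjoint (orderHull L) (orderHull R) := by
  rcases h with h | h
  · exact disjoint_orderHull_of_forall_le hd h
  · exact (disjoint_orderHull_of_forall_le hd.symm fun b hb a ha => h a ha b hb).symm

variable [LinearOrder α] {A B L R : Multiset α}

theorem orderHull_inter_nonempty_of_not_orderedPair (h : ¬ OrderedPair A B) :
    (orderHull A ∩ orderHull B).Nonempty := by
  simp only [OrderedPair, not_or, not_forall, not_le] at h
  obtain ⟨⟨a, ha, b, hb, hba⟩, a', ha', b', hb', hab'⟩ := h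
  rcases le_total a' b with hle | hle
  · exact ⟨b, ⟨⟨a', ha', hle⟩, a, ha, hba.le⟩, ⟨b, hb, le_rfl⟩, b, hb, le_rfl⟩
  · exact ⟨a', ⟨⟨a', ha', le_rfl⟩, a', ha', le_rfl⟩, ⟨b, hb, hle⟩, b', hb', hab'.le⟩

theorem orderHull_add_subset_of_inter_nonempty (h : (orderHull A ∩ orderHull B).Nonempty) :
    orderHull (A + B) ⊆ orderHull A ∪ orderHull B := by
  obtain ⟨p, ⟨hAp, hpA⟩, hBp, hpB⟩ := h
  have extend_above {X : Multiset α} {x : α} (hx : x ≤ p) :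
      (∃ b ∈ X, p ≤ b) → ∃ b ∈ X, x ≤ b := fun ⟨b, hb, hpb⟩ => ⟨b, hb, hx.trans hpb⟩
  have extend_below {X : Multiset α} {x : α} (hx : p ≤ x) :
      (∃ a ∈ X, a ≤ p) → ∃ a ∈ X, a ≤ x := fun ⟨a, ha, hap⟩ => ⟨a, ha, hap.trans hx⟩
  rintro x ⟨⟨a, ha, hax⟩, b, hb, hxb⟩
  rcases le_total x p with hxp | hpx
  · exact (Multiset.mem_add.1 ha).imp (fun ha => ⟨⟨a, ha, hax⟩, extend_above hxp hpA⟩)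
      fun ha => ⟨⟨a, ha, hax⟩, extend_above hxp hpB⟩
  · exact (Multiset.mem_add.1 hb).imp (fun hb => ⟨extend_below hpx hAp, b, hb, hxb⟩)
      fun hb => ⟨extend_below hpx hBp, b, hb, hxb⟩

theorem ncard_orderHull_add_lt [Finite α] (hsum : L + R = A + B) (hnodup : (A + B).Nodup)
    (hLR : OrderedPair L R) (hAB : ¬ OrderedPair A B) :
    (orderHull L).ncard + (orderHull R).ncard < (orderHull A).ncard + (orderHull B).ncard := by
  have hinter := orderHull_inter_nonempty_of_not_orderedPair hAB
  have hdisj : Disjoint (orderHull L) (orderHull R) :=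
    hLR.disjoint_orderHull (Multiset.nodup_add.1 (hsum ▸ hnodup)).2.2
  have hsub : orderHull L ∪ orderHull R ⊆ orderHull A ∪ orderHull B :=
    calc orderHull L ∪ orderHull R
      _ ⊆ orderHull (L + R) := Set.union_subset (orderHull_mono (Multiset.le_add_right L R))
          (orderHull_mono (Multiset.le_add_left R L))
      _ = orderHull (A + B) := by rw [hsum]
      _ ⊆ orderHull A ∪ orderHull B := orderHull_add_subset_of_inter_nonempty hinter
  calc (orderHull L).ncard + (orderHull R).ncard
    _ = (orderHull L ∪ orderHull R).ncard := (Set.ncard_union_eq hdisj).symm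
    _ ≤ (orderHull A ∪ orderHull B).ncard := Set.ncard_le_ncard hsub
    _ < (orderHull A ∪ orderHull B).ncard + (orderHull A ∩ orderHull B).ncard :=
        Nat.lt_add_of_pos_right ((Set.ncard_pos).2 hinter)
    _ = (orderHull A).ncard + (orderHull B).ncard := Set.ncard_union_add_ncard_inter _ _

end OrderHull

/-- The partition `P'` redistributes the elements of `P` without changing the multiset of part
sizes and without increasing the total cost. Parts may be empty. -/
structure IsImprovement [AddCommMonoid M] [LE M] (C : Multiset α → M)
    (P' P : Multiset (Multiset α)) : Prop where
  sum_eq : P'.sum = P.sum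
  map_card_eq : P'.map Multiset.card = P.map Multiset.card
  cost_le : (P'.map C).sum ≤ (P.map C).sum

namespace IsImprovement

variable [AddCommMonoid M] {P P' P'' : Multiset (Multiset α)}

theorem ne_zero [LE M] {C : Multiset α → M} (h : IsImprovement C P' P) (hP : ∀ X ∈ P, X ≠ 0) :
    ∀ X ∈ P', X ≠ 0 := by
  rintro X hX rfl
  have hcard : 0 ∈ P.map Multiset.card := h.map_card_eq ▸ Multiset.mem_map_of_mem Multiset.card hX
  obtain ⟨Y, hY, hY0⟩ := Multiset.mem_map.1 hcard
  exact hP Y hY (Multiset.card_eq_zero.1 hY0)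

theorem map [LE M] {C : Multiset β → M} {v : α → β}
    (h : IsImprovement (fun A => C (A.map v)) P' P) :
    IsImprovement C (P'.map (Multiset.map v)) (P.map (Multiset.map v)) where
  sum_eq := by rw [sum_map_multisetMap, sum_map_multisetMap, h.sum_eq]
  map_card_eq := by
    simpa only [Multiset.map_map, Function.comp_def, Multiset.card_map] using h.map_card_eq
  cost_le := by simpa only [Multiset.map_map] using! h.cost_le

variable [Preorder M] {C : Multiset α → M}

theorem refl (C : Multiset α → M) (P : Multiset (Multiset α)) : IsImprovement C P P :=
  ⟨rfl, rfl, le_rfl⟩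

theorem trans (h' : IsImprovement C P'' P') (h : IsImprovement C P' P) : IsImprovement C P'' P :=
  ⟨h'.sum_eq.trans h.sum_eq, h'.map_card_eq.trans h.map_card_eq, h'.cost_le.trans h.cost_le⟩

theorem add_right [IsOrderedAddMonoid M] (h : IsImprovement C P' P) (T : Multiset (Multiset α)) :
    IsImprovement C (P' + T) (P + T) where
  sum_eq := by rw [Multiset.sum_add, Multiset.sum_add, h.sum_eq]
  map_card_eq := by rw [Multiset.map_add, Multiset.map_add, h.map_card_eq]
  cost_le := by
    simp only [Multiset.map_add, Multiset.sum_add]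
    gcongr
    exact h.cost_le

end IsImprovement

/-- `TwoPartitionOrderedMinimizable` for multisets over an arbitrary order and costs in an arbitrary
ordered monoid. -/
def PairOrderedMinimizable [LE α] [AddCommMonoid M] [LE M] (C : Multiset α → M) : Prop :=
  ∀ A B : Multiset α, A ≠ 0 → B ≠ 0 →
    ∃ L R : Multiset α, OrderedPair L R ∧ IsImprovement C {L, R} {A, B}

theorem TwoPartitionOrderedMinimizable.pairOrderedMinimizable {C : Multiset ℝ → ℝ}
    (h : TwoPartitionOrderedMinimizable C) : PairOrderedMinimizable C := fun A B hA hB => by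
  obtain ⟨L, R, hsum, hLR, hcard, hcost⟩ := h A B hA hB
  exact ⟨L, R, hLR, by simpa using hsum, by simpa using hcard, by simpa using hcost⟩

namespace PairOrderedMinimizable

variable [LinearOrder α] [AddCommMonoid M]

theorem comp_map [LinearOrder β] [LE M] {C : Multiset β → M} (h : PairOrderedMinimizable C)
    {v : α → β} (hv : Monotone v) : PairOrderedMinimizable fun A : Multiset α => C (A.map v) := by
  intro A B hA hB
  obtain ⟨L, R, hLR, himp⟩ := h (A.map v) (B.map v) (by simpa using hA) (by simpa using hB)
  have hsum : L + R = (A + B).map v := by simpa using himp.sum_eq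
  obtain ⟨L', R', hsum', rfl, rfl, hLR'⟩ := hLR.exists_lift hv hsum
  exact ⟨L', R', hLR', by simpa using hsum', by simpa using himp.map_card_eq,
    by simpa using himp.cost_le⟩

theorem exists_pair_isImprovement_ncard_lt [Finite α] [LE M] {C : Multiset α → M}
    (h : PairOrderedMinimizable C) {A B : Multiset α} (hnodup : (A + B).Nodup)
    (hAB : ¬ OrderedPair A B) :
    ∃ L R : Multiset α, IsImprovement C {L, R} {A, B} ∧
      (orderHull L).ncard + (orderHull R).ncard < (orderHull A).ncard + (orderHull B).ncard := by
  have hA : A ≠ 0 := by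
    rintro rfl
    exact hAB (.zero_left B)
  have hB : B ≠ 0 := by
    rintro rfl
    exact hAB (OrderedPair.zero_left A).symm
  obtain ⟨L, R, hLR, himp⟩ := h A B hA hB
  have hsum : L + R = A + B := by simpa using himp.sum_eq
  exact ⟨L, R, himp, ncard_orderHull_add_lt hsum hnodup hLR hAB⟩

variable [Preorder M] [IsOrderedAddMonoid M]

theorem exists_pairwise_isImprovement_of_nodup [Finite α] {C : Multiset α → M}
    (h : PairOrderedMinimizable C) (Q : Multiset (Multiset α)) (hQ : Q.sum.Nodup) :
    ∃ Q' : Multiset (Multiset α), Q'.Pairwise OrderedPair ∧ IsImprovement C Q' Q := by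
  induction hN : (Q.map fun A => (orderHull A).ncard).sum using Nat.strong_induction_on
    generalizing Q with
  | _ N ih =>
  by_cases hord : Q.Pairwise OrderedPair
  · exact ⟨Q, hord, .refl C Q⟩
  obtain ⟨A, B, T, rfl, hAB⟩ := exists_eq_pair_add_of_not_pairwise hord
  have hnodup : (A + B).Nodup := by
    rw [Multiset.sum_add, Multiset.sum_pair] at hQ
    exact (Multiset.nodup_add.1 hQ).1
  obtain ⟨L, R, hpair, hlt⟩ := h.exists_pair_isImprovement_ncard_lt hnodup hAB
  have himp : IsImprovement C ({L, R} + T) ({A, B} + T) := hpair.add_right T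
  have hdecrease : (({L, R} + T).map fun A => (orderHull A).ncard).sum < N := by
    rw [← hN, Multiset.map_add, Multiset.map_add, Multiset.sum_add, Multiset.sum_add]
    gcongr
    simpa using hlt
  obtain ⟨Q', hord', himp'⟩ := ih _ hdecrease _ (himp.sum_eq ▸ hQ) rfl
  exact ⟨Q', hord', himp'.trans himp⟩

end PairOrderedMinimizable

theorem two_partition_OM_implies_q_partition_OM_general [LinearOrder α] [AddCommMonoid M]
    [Preorder M] [IsOrderedAddMonoid M] (C : Multiset α → M) (h2 : PairOrderedMinimizable C)
    (P : Multiset (Multiset α)) :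
    ∃ P' : Multiset (Multiset α), P'.Pairwise OrderedPair ∧ IsImprovement C P' P := by
  obtain ⟨n, v, hv, hlabels⟩ := exists_monotone_map_univ_eq P.sum
  obtain ⟨Q, hQ, rfl⟩ := exists_sum_eq_of_map_eq_sum hlabels
  obtain ⟨Q', ⟨l, rfl, hl⟩, himp⟩ := (h2.comp_map hv).exists_pairwise_isImprovement_of_nodup Q
    (hQ ▸ Finset.univ.nodup)
  exact ⟨_, ⟨l.map (Multiset.map v), Multiset.map_coe _ _, hl.map _ fun _ _ h => h.map hv⟩,
    himp.map⟩

/-- If a total cost function is 2-partition ordered minimizable, then for every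
`q ≥ 1` it is `q`-partition ordered minimizable. -/
theorem two_partition_OM_implies_q_partition_OM
    (C : Multiset ℝ → ℝ) (h2 : TwoPartitionOrderedMinimizable C)
    (q : ℕ) (hq : 1 ≤ q) (Ω : Multiset ℝ) (P : Multiset (Multiset ℝ))
    (hsum : P.sum = Ω) (hne : ∀ X ∈ P, X ≠ 0) (hcard : Multiset.card P = q) :
    ∃ P' : Multiset (Multiset ℝ), P'.sum = Ω ∧ (∀ X ∈ P', X ≠ 0) ∧
      Multiset.Pairwise PairwiseOrdered P' ∧
      P'.map Multiset.card = P.map Multiset.card ∧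
      (P'.map C).sum ≤ (P.map C).sum := by
  obtain ⟨P', hord, himp⟩ :=
    two_partition_OM_implies_q_partition_OM_general C h2.pairOrderedMinimizable P
  exact ⟨P', himp.sum_eq.trans hsum, himp.ne_zero hne, hord, himp.map_card_eq, himp.cost_le⟩
end

section
/- The sum-of-squares-error cost SSE is 2-partition ordered minimizable: for every finite multiset Ω of reals and every partition of Ω into two nonempty multisets A, B there exist pairwise ordered multisets L, R with L + R = Ω, whose multiset of cardinalities {|L|,|R|} equals {|A|,|B|}, and with SSE(L) + SSE(R) ≤ SSE(A) + SSE(B). -/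
/-- Sum of squares error: `SSE(X) = Σ_{x∈X} (x − μ(X))²` with `μ(X)` the mean of `X`. -/
noncomputable def SSE (X : Multiset ℝ) : ℝ :=
  (X.map (fun x => (x - X.sum / (Multiset.card X : ℝ)) ^ 2)).sum

/-!
Exchange the names of `A` and `B` if necessary, so that their means satisfy `a ≤ b`, and let `L`
consist of the `|A|` smallest elements of `Ω` and `R` of the rest. Charging `(x - a) ^ 2` to the
elements of one part and `(x - b) ^ 2` to those of the other costs `SSE A + SSE B` on the partition
`A, B`. The excess `(x - a) ^ 2 - (x - b) ^ 2` of the first charge over the second is monotone in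
`x`, so the same charges cost no more on `L, R`, and replacing `a` and `b` by the means of `L` and
`R` lowers the cost further to `SSE L + SSE R`.
-/

theorem exists_add_eq_card_eq_forall_le {α : Type*} [LinearOrder α] {s : Multiset α} {k : ℕ}
    (hk : k ≤ s.card) :
    ∃ l r : Multiset α, l + r = s ∧ l.card = k ∧ ∀ a ∈ l, ∀ b ∈ r, a ≤ b := by
  refine ⟨((s.sort (· ≤ ·)).take k : List α), ((s.sort (· ≤ ·)).drop k : List α), ?_, ?_, ?_⟩
  · rw [Multiset.coe_add, List.take_append_drop, Multiset.sort_eq]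
  · simpa using hk
  · have hsorted := s.pairwise_sort (· ≤ ·)
    rw [← List.take_append_drop k (s.sort (· ≤ ·)), List.pairwise_append] at hsorted
    simpa only [Multiset.mem_coe] using hsorted.2.2

theorem sum_le_sum_of_forall_le_of_le_add {M : Type*} [AddCommMonoid M] [PartialOrder M]
    [IsOrderedAddMonoid M] {l r s : Multiset M} (hlr : ∀ a ∈ l, ∀ b ∈ r, a ≤ b) (hs : s ≤ l + r)
    (hcard : l.card = s.card) : l.sum ≤ s.sum := by
  classical
  have hl : l - s + l ∩ s = l := Multiset.sub_add_inter l s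
  have hs' : s - l + l ∩ s = s := by rw [Multiset.inter_comm, Multiset.sub_add_inter]
  have hsub : s - l ≤ r := tsub_le_iff_left.2 hs
  have hcard_sub : (l - s).card = (s - l).card := by
    have hcl := congrArg Multiset.card hl
    have hcs := congrArg Multiset.card hs'
    simp only [Multiset.card_add] at hcl hcs
    omega
  have hrel : (l - s).Rel (· ≤ ·) (s - l) :=
    Multiset.rel_of_forall (fun a b ha hb => hlr a (Multiset.mem_of_le tsub_le_self ha) b
      (Multiset.mem_of_le hsub hb)) hcard_sub
  calc l.sum = (l - s).sum + (l ∩ s).sum := by rw [← Multiset.sum_add, hl]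
    _ ≤ (s - l).sum + (l ∩ s).sum := by gcongr; exact Multiset.sum_le_sum_of_rel_le hrel
    _ = s.sum := by rw [← Multiset.sum_add, hs']

theorem sum_map_add_sum_map_le_of_monotone_sub {α G : Type*} [Preorder α] [AddCommGroup G]
    [PartialOrder G] [IsOrderedAddMonoid G] {f g : α → G} (hfg : Monotone (f - g))
    {l r s t : Multiset α} (hlr : ∀ a ∈ l, ∀ b ∈ r, a ≤ b) (hadd : l + r = s + t)
    (hcard : l.card = s.card) :
    (l.map f).sum + (r.map g).sum ≤ (s.map f).sum + (t.map g).sum := by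
  have hsplit (u v : Multiset α) :
      (u.map f).sum + (v.map g).sum = (u.map (f - g)).sum + ((u + v).map g).sum := by
    simp only [Pi.sub_apply, Multiset.sum_map_sub, Multiset.map_add, Multiset.sum_add]
    abel
  have hsum : (l.map (f - g)).sum ≤ (s.map (f - g)).sum := by
    refine sum_le_sum_of_forall_le_of_le_add (r := r.map (f - g)) ?_ ?_ (by simpa using hcard)
    · simp only [Multiset.mem_map]
      rintro _ ⟨a, ha, rfl⟩ _ ⟨b, hb, rfl⟩
      exact hfg (hlr a ha b hb)
    · rw [← Multiset.map_add, hadd]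
      exact Multiset.map_le_map (Multiset.le_add_right s t)
  rw [hsplit l r, hsplit s t, hadd]
  gcongr

theorem monotone_sub_sq_sub_sub_sq {R : Type*} [CommRing R] [PartialOrder R] [IsOrderedRing R]
    {a b : R} (hab : a ≤ b) : Monotone ((fun x => (x - a) ^ 2) - fun x => (x - b) ^ 2) := by
  intro x y hxy
  rw [← sub_nonneg]
  calc 0 ≤ 2 * ((b - a) * (y - x)) :=
        mul_nonneg zero_le_two (mul_nonneg (sub_nonneg.2 hab) (sub_nonneg.2 hxy))
    _ = _ := by simp only [Pi.sub_apply]; ring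

theorem sum_map_sub_sq {R : Type*} [CommRing R] (X : Multiset R) (c : R) :
    (X.map fun x => (x - c) ^ 2).sum = (X.map (· ^ 2)).sum - 2 * c * X.sum + X.card * c ^ 2 := by
  induction X using Multiset.induction_on with
  | empty => simp
  | cons a X ih =>
    simp only [Multiset.map_cons, Multiset.sum_cons, Multiset.card_cons, Nat.cast_succ, ih]
    ring

theorem sum_map_sub_sq_eq_sse_add (X : Multiset ℝ) (c : ℝ) :
    (X.map fun x => (x - c) ^ 2).sum = SSE X + X.card * (X.sum / X.card - c) ^ 2 := by
  have hmean : (X.card : ℝ) * (X.sum / X.card) = X.sum := by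
    rcases eq_or_ne X 0 with rfl | hX
    · simp
    · exact mul_div_cancel₀ _ (by simpa using hX)
  rw [SSE, sum_map_sub_sq, sum_map_sub_sq]
  linear_combination (2 * c - 2 * (X.sum / X.card)) * hmean

theorem sse_le_sum_map_sub_sq (X : Multiset ℝ) (c : ℝ) :
    SSE X ≤ (X.map fun x => (x - c) ^ 2).sum := by
  rw [sum_map_sub_sq_eq_sse_add]
  exact le_add_of_nonneg_right (by positivity)

theorem sse_add_sse_le_of_mean_le_mean {A B L R : Multiset ℝ}
    (hmean : A.sum / A.card ≤ B.sum / B.card) (hLR : ∀ a ∈ L, ∀ b ∈ R, a ≤ b)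
    (hadd : L + R = A + B) (hcard : L.card = A.card) : SSE L + SSE R ≤ SSE A + SSE B :=
  calc SSE L + SSE R
    _ ≤ (L.map fun x => (x - A.sum / A.card) ^ 2).sum +
          (R.map fun x => (x - B.sum / B.card) ^ 2).sum :=
        add_le_add (sse_le_sum_map_sub_sq L _) (sse_le_sum_map_sub_sq R _)
    _ ≤ SSE A + SSE B :=
        sum_map_add_sum_map_le_of_monotone_sub (monotone_sub_sq_sub_sub_sq hmean) hLR hadd hcard

theorem exists_ordered_sse_le_of_mean_le_mean {A B : Multiset ℝ}
    (hmean : A.sum / A.card ≤ B.sum / B.card) :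
    ∃ L R : Multiset ℝ, L + R = A + B ∧ PairwiseOrdered L R ∧ L.card = A.card ∧
      R.card = B.card ∧ SSE L + SSE R ≤ SSE A + SSE B := by
  obtain ⟨L, R, hadd, hL, hLR⟩ :=
    exists_add_eq_card_eq_forall_le (Multiset.card_le_card (Multiset.le_add_right A B))
  have hR : R.card = B.card := by
    have hcard := congrArg Multiset.card hadd
    rwa [Multiset.card_add, Multiset.card_add, hL, Nat.add_left_cancel_iff] at hcard
  exact ⟨L, R, hadd, Or.inl hLR, hL, hR, sse_add_sse_le_of_mean_le_mean hmean hLR hadd hL⟩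

/-- The sum-of-squares-error cost is 2-partition ordered minimizable. -/
theorem sse_two_partition_ordered_minimizable
    (Ω A B : Multiset ℝ) (hpart : A + B = Ω) (hA : A ≠ 0) (hB : B ≠ 0) :
    ∃ L R : Multiset ℝ, L + R = Ω ∧ PairwiseOrdered L R ∧
      ({Multiset.card L, Multiset.card R} : Multiset ℕ) =
        {Multiset.card A, Multiset.card B} ∧
      SSE L + SSE R ≤ SSE A + SSE B := by
  rcases le_total (A.sum / A.card) (B.sum / B.card) with hmean | hmean
  · obtain ⟨L, R, hadd, hLR, hL, hR, hle⟩ := exists_ordered_sse_le_of_mean_le_mean hmean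
    exact ⟨L, R, hadd.trans hpart, hLR, by rw [hL, hR], hle⟩
  · obtain ⟨L, R, hadd, hLR, hL, hR, hle⟩ := exists_ordered_sse_le_of_mean_le_mean hmean
    exact ⟨L, R, by rw [hadd, add_comm, hpart], hLR, by rw [hL, hR, Multiset.pair_comm],
      hle.trans_eq (add_comm _ _)⟩
end

section
/- The round-down cost C_↓ is 2-partition ordered minimizable: for every finite multiset Ω of reals and every partition of Ω into two nonempty multisets A, B there exist pairwise ordered multisets L, R with L + R = Ω, whose multiset of cardinalities {|L|,|R|} equals {|A|,|B|}, and with C_↓(L) + C_↓(R) ≤ C_↓(A) + C_↓(B). -/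
/-- Minimum of a (nonempty finite) multiset of reals. -/
noncomputable def mmin (X : Multiset ℝ) : ℝ := sInf {y : ℝ | y ∈ X}

/-- Round-down cost: `C_↓(X) = Σ_{x∈X} (x − min(X))`. -/
noncomputable def Cdown (X : Multiset ℝ) : ℝ :=
  (X.map (fun x => x - mmin X)).sum

/-!
Since `C_↓(X) = Σ X - |X| * min X` and the total sum is fixed, a repartition that keeps the two
cardinalities cannot raise the cost as long as it lowers neither minimum. Say `min A ≤ min B`; let
`L` be the `|A|` smallest elements of `A + B` and `R` the `|B|` largest. Then `min L` is the overall
minimum `min A`, and `min R ≥ min B` because `A + B` has at least `|B|` elements `≥ min B`.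
-/

section LinearOrder

variable {α : Type*} [LinearOrder α]

theorem exists_add_eq_card_eq_forall_le_s5 {X : Multiset α} {m n : ℕ} (hcard : X.card = m + n) :
    ∃ L R : Multiset α, L + R = X ∧ L.card = m ∧ R.card = n ∧ ∀ a ∈ L, ∀ b ∈ R, a ≤ b := by
  have hsplit : X.sort.take m ++ X.sort.drop m = X.sort := List.take_append_drop m X.sort
  have hsorted : (X.sort.take m ++ X.sort.drop m).Pairwise (· ≤ ·) :=
    hsplit.symm ▸ X.pairwise_sort (· ≤ ·)
  refine ⟨↑(X.sort.take m), ↑(X.sort.drop m), ?_, ?_, ?_, ?_⟩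
  · rw [Multiset.coe_add, hsplit, Multiset.sort_eq]
  · simp [hcard]
  · simp [hcard]
  · exact (List.pairwise_append.1 hsorted).2.2

theorem le_of_add_eq_add_of_card_le {A B L R : Multiset α} {b r : α} (hadd : L + R = A + B)
    (hcard : R.card ≤ B.card) (hb : ∀ x ∈ B, b ≤ x) (hr : r ∈ R) (hL : ∀ x ∈ L, x ≤ r) :
    b ≤ r := by
  by_contra! hrb
  have hcountL : L.countP (r < ·) = 0 :=
    Multiset.countP_eq_zero.2 fun x hx => (hL x hx).not_gt
  have hcountB : B.countP (r < ·) = B.card :=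
    Multiset.countP_eq_card.2 fun x hx => hrb.trans_le (hb x hx)
  have hcountR : R.countP (r < ·) < R.card :=
    (Multiset.countP_le_card _ R).lt_of_ne fun h =>
      lt_irrefl r (Multiset.countP_eq_card.1 h r hr)
  have hcount := congrArg (Multiset.countP (r < ·)) hadd
  rw [Multiset.countP_add, Multiset.countP_add] at hcount
  lia

end LinearOrder

theorem isLeast_mmin {X : Multiset ℝ} (hX : X ≠ 0) : IsLeast {x | x ∈ X} (mmin X) := by
  have hfinite : {x | x ∈ X}.Finite := by simp
  exact ⟨Set.Nonempty.csInf_mem (Multiset.exists_mem_of_ne_zero hX) hfinite,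
    fun _ hx => csInf_le hfinite.bddBelow hx⟩

theorem Cdown_eq_sum_sub_card_mul_mmin (X : Multiset ℝ) :
    Cdown X = X.sum - X.card * mmin X := by
  simp [Cdown, Multiset.sum_map_sub]

theorem Cdown_add_Cdown_le_of_mmin_le {A B L R : Multiset ℝ}
    (hsum : L.sum + R.sum = A.sum + B.sum) (hcardL : L.card = A.card) (hcardR : R.card = B.card)
    (hminL : mmin A ≤ mmin L) (hminR : mmin B ≤ mmin R) :
    Cdown L + Cdown R ≤ Cdown A + Cdown B := by
  simp only [Cdown_eq_sum_sub_card_mul_mmin, hcardL, hcardR]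
  have hmulL : A.card * mmin A ≤ A.card * mmin L := by gcongr
  have hmulR : B.card * mmin B ≤ B.card * mmin R := by gcongr
  linarith

theorem Cdown_add_Cdown_le_of_forall_le {A B L R : Multiset ℝ} (hA : A ≠ 0) (hB : B ≠ 0)
    (hmin : mmin A ≤ mmin B) (hadd : L + R = A + B) (hcardL : L.card = A.card)
    (hLR : ∀ a ∈ L, ∀ b ∈ R, a ≤ b) :
    Cdown L + Cdown R ≤ Cdown A + Cdown B := by
  have hcardR : R.card = B.card := by
    have := congrArg Multiset.card hadd
    simp only [Multiset.card_add] at this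
    lia
  have hL : mmin L ∈ L := (isLeast_mmin (by simpa [← Multiset.card_pos, hcardL] using hA)).1
  have hR : mmin R ∈ R := (isLeast_mmin (by simpa [← Multiset.card_pos, hcardR] using hB)).1
  have hminL : mmin A ≤ mmin L := by
    have hmem : mmin L ∈ A + B := hadd ▸ Multiset.mem_add.2 (.inl hL)
    rcases Multiset.mem_add.1 hmem with hmemA | hmemB
    · exact (isLeast_mmin hA).2 hmemA
    · exact hmin.trans ((isLeast_mmin hB).2 hmemB)
  have hminR : mmin B ≤ mmin R :=
    le_of_add_eq_add_of_card_le hadd hcardR.le (isLeast_mmin hB).2 hR fun a ha => hLR a ha _ hR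
  have hsum : L.sum + R.sum = A.sum + B.sum := by
    rw [← Multiset.sum_add, hadd, Multiset.sum_add]
  exact Cdown_add_Cdown_le_of_mmin_le hsum hcardL hcardR hminL hminR

/-- The round-down cost is 2-partition ordered minimizable. -/
theorem rounddown_two_partition_ordered_minimizable
    (Ω A B : Multiset ℝ) (hpart : A + B = Ω) (hA : A ≠ 0) (hB : B ≠ 0) :
    ∃ L R : Multiset ℝ, L + R = Ω ∧ PairwiseOrdered L R ∧
      ({Multiset.card L, Multiset.card R} : Multiset ℕ) =
        {Multiset.card A, Multiset.card B} ∧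
      Cdown L + Cdown R ≤ Cdown A + Cdown B := by
  wlog hmin : mmin A ≤ mmin B generalizing A B
  · simpa only [Multiset.pair_comm (Multiset.card A), add_comm (Cdown A)] using
      this B A (by rwa [add_comm]) hB hA (le_of_not_ge hmin)
  obtain ⟨L, R, hadd, hcardL, hcardR, hLR⟩ :=
    exists_add_eq_card_eq_forall_le_s5 (Multiset.card_add A B)
  exact ⟨L, R, hadd.trans hpart, .inl hLR, by rw [hcardL, hcardR],
    Cdown_add_Cdown_le_of_forall_le hA hB hmin hadd hcardL hLR⟩
end

section
/- The sum-of-absolute-error cost is concave on sorted data: for reals x₁ ≤ x₂ ≤ … ≤ x_n and all integers 0 ≤ a < b < c < d ≤ n, SAE(a,c) + SAE(b,d) ≤ SAE(a,d) + SAE(b,c). -/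
/-- Sum of absolute error: `SAE(X) = min_{m∈ℝ} Σ_{x∈X} |x − m|`
(the minimum is attained at a median of `X`). -/
noncomputable def SAE (X : Multiset ℝ) : ℝ :=
  sInf (Set.range fun m : ℝ => (X.map (fun x => |x - m|)).sum)

/-- The multiset `{x_{i+1}, …, x_j}` of the data points with indices in `(i, j]`. -/
def intervalMS (x : ℕ → ℝ) (i j : ℕ) : Multiset ℝ := (Finset.Ioc i j).val.map x

/-!
Take centres `m` for the long interval and `k` for the short one. Clamping `k` to the range of the
short interval only lowers its cost. If `m ≤ k`, then `m` serves the left interval, `k` the right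
one, and replacing `m` by `k` on the points to the right of `k` is a gain; if `k ≤ m`, exchange the
roles of left and right. Minimising over `m` and `k` gives the inequality.
-/

/-- The total absolute deviation `Σ_{y ∈ X} |y - m|` of `X` from the centre `m`, the objective
function whose infimum over `m` is `SAE X`. -/
def absDev (X : Multiset ℝ) (m : ℝ) : ℝ := (X.map fun y => |y - m|).sum

theorem absDev_add (X Y : Multiset ℝ) (m : ℝ) :
    absDev (X + Y) m = absDev X m + absDev Y m := by
  simp [absDev]

theorem absDev_nonneg (X : Multiset ℝ) (m : ℝ) : 0 ≤ absDev X m :=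
  Multiset.sum_nonneg <| Multiset.forall_mem_map_iff.2 fun _ _ => abs_nonneg _

theorem absDev_le_absDev_of_forall_mem_uIcc {X : Multiset ℝ} {m k : ℝ}
    (h : ∀ y ∈ X, k ∈ Set.uIcc m y) : absDev X k ≤ absDev X m :=
  Multiset.sum_map_le_sum_map _ _ fun y hy => Set.abs_sub_right_of_mem_uIcc (h y hy)

theorem exists_mem_Icc_forall_mem_uIcc {α : Type*} [LinearOrder α] {lo hi : α} (h : lo ≤ hi)
    (k : α) : ∃ k' ∈ Set.Icc lo hi, ∀ y ∈ Set.Icc lo hi, k' ∈ Set.uIcc k y := by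
  rcases le_total k lo with hk | hk
  · exact ⟨lo, Set.left_mem_Icc.2 h, fun y hy => Set.mem_uIcc_of_le hk hy.1⟩
  rcases le_total hi k with hk' | hk'
  · exact ⟨hi, Set.right_mem_Icc.2 h, fun y hy => Set.mem_uIcc_of_ge hy.2 hk'⟩
  · exact ⟨k, ⟨hk, hk'⟩, fun _ _ => Set.left_mem_uIcc⟩

theorem SAE_le_absDev (X : Multiset ℝ) (m : ℝ) : SAE X ≤ absDev X m :=
  ciInf_le ⟨0, Set.forall_mem_range.2 (absDev_nonneg X)⟩ m

theorem le_SAE_add_SAE {X Y : Multiset ℝ} {r : ℝ}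
    (h : ∀ m k, r ≤ absDev X m + absDev Y k) : r ≤ SAE X + SAE Y :=
  le_ciInf_add_ciInf h

section Quadrangle

variable {L M R : Multiset ℝ}

theorem SAE_add_SAE_le_absDev_add_absDev {m k : ℝ}
    (hL : ∀ y ∈ L, y ≤ k) (hR : ∀ y ∈ R, k ≤ y) :
    SAE (L + M) + SAE (M + R) ≤ absDev (L + M + R) m + absDev M k := by
  rcases le_total m k with hmk | hkm
  · have right_gain : absDev R k ≤ absDev R m :=
      absDev_le_absDev_of_forall_mem_uIcc fun y hy => Set.mem_uIcc_of_le hmk (hR y hy)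
    calc SAE (L + M) + SAE (M + R)
        ≤ absDev (L + M) m + absDev (M + R) k :=
          add_le_add (SAE_le_absDev _ _) (SAE_le_absDev _ _)
      _ ≤ absDev (L + M + R) m + absDev M k := by
          simp only [absDev_add]
          linarith
  · have left_gain : absDev L k ≤ absDev L m :=
      absDev_le_absDev_of_forall_mem_uIcc fun y hy => Set.mem_uIcc_of_ge (hL y hy) hkm
    calc SAE (L + M) + SAE (M + R)
        ≤ absDev (L + M) k + absDev (M + R) m :=
          add_le_add (SAE_le_absDev _ _) (SAE_le_absDev _ _)
      _ ≤ absDev (L + M + R) m + absDev M k := by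
          simp only [absDev_add]
          linarith

theorem SAE_quadrangle {lo hi : ℝ} (h : lo ≤ hi) (hL : ∀ y ∈ L, y ≤ lo)
    (hM : ∀ y ∈ M, y ∈ Set.Icc lo hi) (hR : ∀ y ∈ R, hi ≤ y) :
    SAE (L + M) + SAE (M + R) ≤ SAE (L + M + R) + SAE M := by
  refine le_SAE_add_SAE fun m k => ?_
  obtain ⟨k', hk', between⟩ := exists_mem_Icc_forall_mem_uIcc h k
  calc SAE (L + M) + SAE (M + R)
      ≤ absDev (L + M + R) m + absDev M k' :=
        SAE_add_SAE_le_absDev_add_absDev (fun y hy => (hL y hy).trans hk'.1)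
          fun y hy => hk'.2.trans (hR y hy)
    _ ≤ absDev (L + M + R) m + absDev M k := by
        gcongr
        exact absDev_le_absDev_of_forall_mem_uIcc fun y hy => between y (hM y hy)

end Quadrangle

theorem intervalMS_add_intervalMS (x : ℕ → ℝ) {i j k : ℕ} (hij : i ≤ j) (hjk : j ≤ k) :
    intervalMS x i j + intervalMS x j k = intervalMS x i k := by
  have hdisj : Disjoint (Finset.Ioc i j) (Finset.Ioc j k) :=
    Finset.Ioc_disjoint_Ioc_of_le le_rfl
  rw [intervalMS, intervalMS, intervalMS, ← Multiset.map_add,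
    ← Finset.Ioc_union_Ioc_eq_Ioc hij hjk, ← Finset.disjUnion_eq_union _ _ hdisj,
    Finset.disjUnion_val]

theorem forall_mem_intervalMS {x : ℕ → ℝ} {i j : ℕ} {p : ℝ → Prop} :
    (∀ y ∈ intervalMS x i j, p y) ↔ ∀ t, i < t → t ≤ j → p (x t) := by
  simp only [intervalMS, Multiset.forall_mem_map_iff, Finset.mem_val, Finset.mem_Ioc, and_imp]

/-- The sum-of-absolute-error cost is concave (satisfies the quadrangle inequality)
on sorted data. -/
theorem sae_concave (n : ℕ) (x : ℕ → ℝ)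
    (hsorted : ∀ l m : ℕ, 1 ≤ l → l ≤ m → m ≤ n → x l ≤ x m)
    (a b c d : ℕ) (hab : a < b) (hbc : b < c) (hcd : c < d) (hdn : d ≤ n) :
    SAE (intervalMS x a c) + SAE (intervalMS x b d) ≤
      SAE (intervalMS x a d) + SAE (intervalMS x b c) := by
  have mono {l m : ℕ} (hal : a < l) (hlm : l ≤ m) (hmd : m ≤ d) : x l ≤ x m :=
    hsorted l m (by omega) hlm (hmd.trans hdn)
  rw [← intervalMS_add_intervalMS x (hab.trans hbc).le hcd.le,
    ← intervalMS_add_intervalMS x hab.le hbc.le, ← intervalMS_add_intervalMS x hbc.le hcd.le]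
  apply SAE_quadrangle (lo := x b) (hi := x c)
  · exact mono hab hbc.le hcd.le
  · exact forall_mem_intervalMS.2 fun t hat htb => mono hat htb (by omega)
  · exact forall_mem_intervalMS.2 fun t hbt htc =>
      ⟨mono hab hbt.le (by omega), mono (by omega) htc hcd.le⟩
  · exact forall_mem_intervalMS.2 fun t hct htd => mono (by omega) hct.le htd
end

section
/- The round-up cost is concave on sorted data: for reals x₁ ≤ x₂ ≤ … ≤ x_n and all integers 0 ≤ a < b < c < d ≤ n, C_↑(a,c) + C_↑(b,d) ≤ C_↑(a,d) + C_↑(b,c), where C_↑(i,j) = (j − i)·x_j − Σ_{l=i+1}^{j} x_l. -/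
/-- Round-up cost of the multiset `{x_{i+1}, …, x_j}` on sorted data:
`C_↑(i,j) = (j − i)·x_j − Σ_{l=i+1}^{j} x_l`. -/
noncomputable def CupIdx (x : ℕ → ℝ) (i j : ℕ) : ℝ :=
  ((j - i : ℕ) : ℝ) * x j - ∑ l ∈ Finset.Ioc i j, x l

theorem cupIdx_eq_sum_sub (x : ℕ → ℝ) (i j : ℕ) :
    CupIdx x i j = ∑ l ∈ Finset.Ioc i j, (x j - x l) := by
  rw [CupIdx, Finset.sum_sub_distrib, Finset.sum_const, Nat.card_Ioc, nsmul_eq_mul]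

theorem cupIdx_eq_sum_sub_add_cupIdx (x : ℕ → ℝ) {a b j : ℕ} (hab : a ≤ b) (hbj : b ≤ j) :
    CupIdx x a j = ∑ l ∈ Finset.Ioc a b, (x j - x l) + CupIdx x b j := by
  rw [cupIdx_eq_sum_sub, cupIdx_eq_sum_sub, Finset.sum_Ioc_consecutive _ hab hbj]

theorem roundup_concave_general (x : ℕ → ℝ) {a b c d : ℕ} (hab : a ≤ b) (hbc : b ≤ c)
    (hbd : b ≤ d) (hx : x c ≤ x d) :
    CupIdx x a c + CupIdx x b d ≤ CupIdx x a d + CupIdx x b c := by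
  calc CupIdx x a c + CupIdx x b d
      = ∑ l ∈ Finset.Ioc a b, (x c - x l) + (CupIdx x b c + CupIdx x b d) := by
        rw [cupIdx_eq_sum_sub_add_cupIdx x hab hbc, add_assoc]
    _ ≤ ∑ l ∈ Finset.Ioc a b, (x d - x l) + (CupIdx x b c + CupIdx x b d) := by
        gcongr
    _ = CupIdx x a d + CupIdx x b c := by
        rw [cupIdx_eq_sum_sub_add_cupIdx x hab hbd, add_assoc, add_comm (CupIdx x b c)]

/-- The round-up cost is concave (satisfies the quadrangle inequality) on sorted data. -/
theorem roundup_concave (n : ℕ) (x : ℕ → ℝ)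
    (hsorted : ∀ l m : ℕ, 1 ≤ l → l ≤ m → m ≤ n → x l ≤ x m)
    (a b c d : ℕ) (hab : a < b) (hbc : b < c) (hcd : c < d) (hdn : d ≤ n) :
    CupIdx x a c + CupIdx x b d ≤ CupIdx x a d + CupIdx x b c :=
  roundup_concave_general x hab.le hbc.le (hbc.trans hcd).le
    (hsorted c d (Nat.one_le_of_lt hbc) hcd.le hdn)
end

section
/- The round-down cost is concave on sorted data: for reals x₁ ≤ x₂ ≤ … ≤ x_n and all integers 0 ≤ a < b < c < d ≤ n, C_↓(a,c) + C_↓(b,d) ≤ C_↓(a,d) + C_↓(b,c), where C_↓(i,j) = Σ_{l=i+1}^{j} x_l − (j − i)·x_{i+1}. -/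
/-- Round-down cost of the multiset `{x_{i+1}, …, x_j}` on sorted data:
`C_↓(i,j) = Σ_{l=i+1}^{j} x_l − (j − i)·x_{i+1}`. -/
noncomputable def CdownIdx (x : ℕ → ℝ) (i j : ℕ) : ℝ :=
  (∑ l ∈ Finset.Ioc i j, x l) - ((j - i : ℕ) : ℝ) * x (i + 1)

theorem cdownIdx_eq_sum_sub (x : ℕ → ℝ) (i j : ℕ) :
    CdownIdx x i j = ∑ l ∈ Finset.Ioc i j, (x l - x (i + 1)) := by
  rw [CdownIdx, Finset.sum_sub_distrib, Finset.sum_const, Nat.card_Ioc, nsmul_eq_mul]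

theorem cdownIdx_eq_cdownIdx_add_sum (x : ℕ → ℝ) {i j k : ℕ} (hij : i ≤ j) (hjk : j ≤ k) :
    CdownIdx x i k = CdownIdx x i j + ∑ l ∈ Finset.Ioc j k, (x l - x (i + 1)) := by
  rw [cdownIdx_eq_sum_sub, cdownIdx_eq_sum_sub, Finset.sum_Ioc_consecutive _ hij hjk]

theorem rounddown_concave_general (x : ℕ → ℝ) {a b c d : ℕ} (hac : a ≤ c) (hbc : b ≤ c)
    (hcd : c ≤ d) (hx : x (a + 1) ≤ x (b + 1)) :
    CdownIdx x a c + CdownIdx x b d ≤ CdownIdx x a d + CdownIdx x b c := by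
  have increment_le : ∑ l ∈ Finset.Ioc c d, (x l - x (b + 1)) ≤
      ∑ l ∈ Finset.Ioc c d, (x l - x (a + 1)) :=
    Finset.sum_le_sum fun l _ => sub_le_sub_left hx (x l)
  rw [cdownIdx_eq_cdownIdx_add_sum x hac hcd, cdownIdx_eq_cdownIdx_add_sum x hbc hcd]
  linarith

/-- The round-down cost is concave (satisfies the quadrangle inequality) on sorted data. -/
theorem rounddown_concave (n : ℕ) (x : ℕ → ℝ)
    (hsorted : ∀ l m : ℕ, 1 ≤ l → l ≤ m → m ≤ n → x l ≤ x m)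
    (a b c d : ℕ) (hab : a < b) (hbc : b < c) (hcd : c < d) (hdn : d ≤ n) :
    CdownIdx x a c + CdownIdx x b d ≤ CdownIdx x a d + CdownIdx x b c :=
  rounddown_concave_general x (hab.trans hbc).le hbc.le hcd.le <|
    hsorted (a + 1) (b + 1) (by omega) (by omega) (by omega)
end

section
/- The quadrangle inequality does not imply ordered minimizability: the cost function C_min(X) = min(X) on nonempty finite multisets of nonnegative reals satisfies the quadrangle inequality (on sorted data C_min(a,c) + C_min(b,d) = C_min(a,d) + C_min(b,c) for all 0 ≤ a < b < c < d ≤ n), yet it is not ordered minimizable: for every finite set Ω of at least 4 nonnegative reals with three smallest elements ω₁ < ω₂ < ω₃, the bipartition A = {ω₁, ω₃}, B = Ω \ A has total cost C_min(A) + C_min(B) = ω₁ + ω₂, while every pairwise ordered bipartition {L, R} of Ω with min(|L|,|R|) ≥ 2 has total cost C_min(L) + C_min(R) ≥ ω₁ + ω₃ > ω₁ + ω₂. -/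
/-!
On sorted data `C_min(i, j) = x_{i+1}` depends only on `i`, so both sides of the quadrangle
inequality are `x_{a+1} + x_{b+1}`. In an ordered bipartition whose lower part has at least two
elements, that part uses up the at most two elements below `ω₃`, so the minimum of the upper part is
at least `ω₃`, whereas splitting off `{ω₁, ω₃}` leaves `ω₂` as the other minimum.
-/

section mmin

variable {X : Multiset ℝ} {m : ℝ}

theorem mmin_eq_of_mem_of_forall_le (hm : m ∈ X) (hle : ∀ y ∈ X, m ≤ y) : mmin X = m :=
  IsLeast.csInf_eq ⟨hm, hle⟩

theorem le_mmin (hX : 0 < X.card) (hle : ∀ y ∈ X, m ≤ y) : m ≤ mmin X :=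
  le_csInf (Multiset.card_pos_iff_exists_mem.mp hX) hle

end mmin

section Quadrangle

variable {x : ℕ → ℝ}

theorem mmin_intervalMS_of_monotoneOn {i j : ℕ} (hij : i < j) (hx : MonotoneOn x (Set.Ioc i j)) :
    mmin (intervalMS x i j) = x (i + 1) := by
  have hfirst : i + 1 ∈ Finset.Ioc i j := Finset.mem_Ioc.mpr ⟨i.lt_succ_self, hij⟩
  refine mmin_eq_of_mem_of_forall_le (Multiset.mem_map_of_mem x hfirst) fun y hy => ?_
  obtain ⟨k, hk, rfl⟩ := Multiset.mem_map.mp hy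
  have hk : k ∈ Set.Ioc i j := Finset.mem_Ioc.mp hk
  exact hx ⟨i.lt_succ_self, hij⟩ hk hk.1

theorem mmin_intervalMS_quadrangle_eq {a b c d : ℕ} (hab : a ≤ b) (hbc : b < c) (hcd : c ≤ d)
    (hx : MonotoneOn x (Set.Ioc a d)) :
    mmin (intervalMS x a c) + mmin (intervalMS x b d) =
      mmin (intervalMS x a d) + mmin (intervalMS x b c) := by
  have hmin : ∀ i j, a ≤ i → i < j → j ≤ d → mmin (intervalMS x i j) = x (i + 1) :=
    fun i j hai hij hjd =>
      mmin_intervalMS_of_monotoneOn hij (hx.mono (Set.Ioc_subset_Ioc hai hjd))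
  rw [hmin a c le_rfl (by omega) hcd, hmin b d hab (by omega) le_rfl,
    hmin a d le_rfl (by omega) le_rfl, hmin b c hab hbc hcd]

end Quadrangle

section OrderedBipartition

-- A counterexample `r < t` would put all of `L` and also `r` below `t`.
theorem le_of_mem_of_countP_lt_le_card {α : Type*} [LinearOrder α] {L R : Multiset α} {t r : α}
    (hcount : (L + R).countP (· < t) ≤ L.card) (hLR : ∀ a ∈ L, ∀ b ∈ R, a ≤ b) (hr : r ∈ R) :
    t ≤ r := by
  by_contra! hrt
  have hL : L.countP (· < t) = L.card :=
    Multiset.countP_eq_card.mpr fun a ha => (hLR a ha r hr).trans_lt hrt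
  have hR : 0 < R.countP (· < t) := Multiset.countP_pos.mpr ⟨r, hr, hrt⟩
  rw [Multiset.countP_add] at hcount
  omega

theorem add_le_mmin_add_mmin_of_forall_le {L R : Multiset ℝ} {s t : ℝ}
    (hL : 0 < L.card) (hR : 0 < R.card) (hs : ∀ y ∈ L, s ≤ y)
    (hcount : (L + R).countP (· < t) ≤ L.card) (hLR : ∀ a ∈ L, ∀ b ∈ R, a ≤ b) :
    s + t ≤ mmin L + mmin R :=
  add_le_add (le_mmin hL hs)
    (le_mmin hR fun _ hr => le_of_mem_of_countP_lt_le_card hcount hLR hr)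

theorem PairwiseOrdered.add_le_mmin_add_mmin {L R : Multiset ℝ} {s t : ℝ} {k : ℕ}
    (hLR : PairwiseOrdered L R) (hk : 0 < k) (hL : k ≤ L.card) (hR : k ≤ R.card)
    (hs : ∀ y ∈ L + R, s ≤ y) (hcount : (L + R).countP (· < t) ≤ k) :
    s + t ≤ mmin L + mmin R := by
  have hsL : ∀ y ∈ L, s ≤ y := fun y hy => hs y (Multiset.mem_add.mpr (.inl hy))
  have hsR : ∀ y ∈ R, s ≤ y := fun y hy => hs y (Multiset.mem_add.mpr (.inr hy))
  rcases hLR with hLR | hRL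
  · exact add_le_mmin_add_mmin_of_forall_le (hk.trans_le hL) (hk.trans_le hR) hsL
      (hcount.trans hL) hLR
  · rw [add_comm L R] at hcount
    rw [add_comm (mmin L)]
    exact add_le_mmin_add_mmin_of_forall_le (hk.trans_le hR) (hk.trans_le hL) hsR
      (hcount.trans hR) fun b hb a ha => hRL a ha b hb

end OrderedBipartition

section Triple

variable {α : Type*} {a b c : α}

theorem triple_le_finset_val {Ω : Finset α} (ha : a ∈ Ω) (hb : b ∈ Ω) (hc : c ∈ Ω)
    (hab : a ≠ b) (hac : a ≠ c) (hbc : b ≠ c) : {a, b, c} ≤ Ω.val := by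
  have hnodup : ({a, b, c} : Multiset α).Nodup := by simp [Multiset.insert_eq_cons, hab, hac, hbc]
  refine (Multiset.le_iff_subset hnodup).mpr ?_
  simp [Multiset.insert_eq_cons, Multiset.cons_subset, ha, hb, hc]

theorem mem_finset_val_sub_triple [DecidableEq α] {Ω : Finset α} {y : α} :
    y ∈ Ω.val - {a, b, c} ↔ y ∈ Ω ∧ y ≠ a ∧ y ≠ b ∧ y ≠ c := by
  rw [Multiset.mem_sub_of_nodup Ω.nodup]
  simp

theorem countP_lt_triple_add_le_two [LinearOrder α] {S : Multiset α} (hS : ∀ y ∈ S, c ≤ y) :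
    ({a, b, c} + S).countP (· < c) ≤ 2 := by
  have hS₀ : S.countP (· < c) = 0 := Multiset.countP_eq_zero.mpr fun y hy => (hS y hy).not_gt
  calc ({a, b, c} + S).countP (· < c)
      = ({a, b} : Multiset α).countP (· < c) := by
        simp [Multiset.insert_eq_cons, Multiset.countP_cons, ← Multiset.cons_zero, hS₀]
    _ ≤ 2 := Multiset.countP_le_card _ _

end Triple

section ThreeSmallest

variable {S : Multiset ℝ} {ω₁ ω₂ ω₃ : ℝ}

theorem mmin_pair_add_mmin_sub_pair (h₁₃ : ω₁ ≤ ω₃) (hS : ∀ y ∈ S, ω₂ ≤ y) :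
    mmin {ω₁, ω₃} + mmin ({ω₁, ω₂, ω₃} + S - {ω₁, ω₃}) = ω₁ + ω₂ := by
  have hsub : {ω₁, ω₂, ω₃} + S - {ω₁, ω₃} = ω₂ ::ₘ S := by
    have hsplit : {ω₁, ω₂, ω₃} + S = {ω₁, ω₃} + ω₂ ::ₘ S := by
      simp [Multiset.insert_eq_cons, Multiset.cons_swap ω₁ ω₂]
    rw [hsplit, add_tsub_cancel_left]
  have hpair : mmin {ω₁, ω₃} = ω₁ :=
    mmin_eq_of_mem_of_forall_le (by simp) (by simpa using h₁₃)
  have hrest : mmin (ω₂ ::ₘ S) = ω₂ :=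
    mmin_eq_of_mem_of_forall_le (Multiset.mem_cons_self ω₂ S)
      (Multiset.forall_mem_cons.mpr ⟨le_rfl, hS⟩)
  rw [hsub, hpair, hrest]

theorem PairwiseOrdered.smallest_add_third_le_mmin_add_mmin {L R : Multiset ℝ}
    (hLR : PairwiseOrdered L R) (hL : 2 ≤ L.card) (hR : 2 ≤ R.card)
    (hsum : L + R = {ω₁, ω₂, ω₃} + S) (h₁₂ : ω₁ ≤ ω₂) (h₁₃ : ω₁ ≤ ω₃) (hS : ∀ y ∈ S, ω₃ ≤ y) :
    ω₁ + ω₃ ≤ mmin L + mmin R := by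
  refine hLR.add_le_mmin_add_mmin two_pos hL hR ?_ (hsum ▸ countP_lt_triple_add_le_two hS)
  intro y hy
  have hmem : y = ω₁ ∨ y = ω₂ ∨ y = ω₃ ∨ y ∈ S := by simpa [hsum] using hy
  rcases hmem with rfl | rfl | rfl | hyS
  exacts [le_rfl, h₁₂, h₁₃, h₁₃.trans (hS y hyS)]

end ThreeSmallest

theorem quadrangle_does_not_imply_ordered_minimizable_general :
    (∀ (x : ℕ → ℝ) (a b c d : ℕ), a ≤ b → b < c → c ≤ d → MonotoneOn x (Set.Ioc a d) →
      mmin (intervalMS x a c) + mmin (intervalMS x b d) =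
        mmin (intervalMS x a d) + mmin (intervalMS x b c)) ∧
    (∀ (Ω : Multiset ℝ) (ω₁ ω₂ ω₃ : ℝ), {ω₁, ω₂, ω₃} ≤ Ω → ω₁ ≤ ω₂ → ω₂ < ω₃ →
      (∀ y ∈ Ω - {ω₁, ω₂, ω₃}, ω₃ ≤ y) →
      (mmin {ω₁, ω₃} + mmin (Ω - {ω₁, ω₃}) = ω₁ + ω₂) ∧
      (∀ L R : Multiset ℝ, L + R = Ω → 2 ≤ L.card → 2 ≤ R.card → PairwiseOrdered L R →
        ω₁ + ω₃ ≤ mmin L + mmin R) ∧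
      ω₁ + ω₂ < ω₁ + ω₃) := by
  refine ⟨fun x a b c d => mmin_intervalMS_quadrangle_eq, ?_⟩
  intro Ω ω₁ ω₂ ω₃ hΩ h₁₂ h₂₃ hrest
  obtain ⟨S, rfl⟩ := Multiset.le_iff_exists_add.mp hΩ
  rw [add_tsub_cancel_left] at hrest
  have h₁₃ : ω₁ ≤ ω₃ := h₁₂.trans h₂₃.le
  exact ⟨mmin_pair_add_mmin_sub_pair h₁₃ fun y hy => h₂₃.le.trans (hrest y hy),
    fun L R hsum hL hR hLR => hLR.smallest_add_third_le_mmin_add_mmin hL hR hsum h₁₂ h₁₃ hrest,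
    add_lt_add_right h₂₃ ω₁⟩

/-- The quadrangle inequality does not imply ordered minimizability:
the cost `C_min(X) = min(X)` satisfies the quadrangle inequality (with equality)
on sorted data, yet for every finite set `Ω` of at least 4 nonnegative reals with
three smallest elements `ω₁ < ω₂ < ω₃`, the bipartition `A = {ω₁, ω₃}`,
`B = Ω \ A` has total cost `ω₁ + ω₂`, while every pairwise ordered bipartition
`{L, R}` of `Ω` with `min(|L|,|R|) ≥ 2` has total cost at least `ω₁ + ω₃ > ω₁ + ω₂`. -/
theorem quadrangle_does_not_imply_ordered_minimizable :
    (∀ (n : ℕ) (x : ℕ → ℝ), (∀ l m : ℕ, 1 ≤ l → l ≤ m → m ≤ n → x l ≤ x m) →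
      ∀ a b c d : ℕ, a < b → b < c → c < d → d ≤ n →
        mmin (intervalMS x a c) + mmin (intervalMS x b d) =
          mmin (intervalMS x a d) + mmin (intervalMS x b c)) ∧
    (∀ (Ω : Finset ℝ), 4 ≤ Ω.card → (∀ y ∈ Ω, 0 ≤ y) →
      ∀ ω₁ ω₂ ω₃ : ℝ, ω₁ ∈ Ω → ω₂ ∈ Ω → ω₃ ∈ Ω → ω₁ < ω₂ → ω₂ < ω₃ →
        (∀ y ∈ Ω, y ≠ ω₁ → y ≠ ω₂ → y ≠ ω₃ → ω₃ < y) →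
        (mmin ({ω₁, ω₃} : Multiset ℝ) + mmin (Ω.val - {ω₁, ω₃}) = ω₁ + ω₂) ∧
        (∀ L R : Multiset ℝ, L + R = Ω.val →
          2 ≤ Multiset.card L → 2 ≤ Multiset.card R → PairwiseOrdered L R →
          ω₁ + ω₃ ≤ mmin L + mmin R) ∧
        ω₁ + ω₂ < ω₁ + ω₃) := by
  obtain ⟨hquadrangle, hminimum⟩ := quadrangle_does_not_imply_ordered_minimizable_general
  constructor
  · intro n x hx a b c d hab hbc hcd hdn
    exact hquadrangle x a b c d hab.le hbc hcd.le fun l hl m hm hlm =>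
      hx l m (Nat.one_le_of_lt hl.1) hlm (hm.2.trans hdn)
  · intro Ω _ _ ω₁ ω₂ ω₃ h₁ h₂ h₃ h₁₂ h₂₃ hlarge
    exact hminimum Ω.val ω₁ ω₂ ω₃
      (triple_le_finset_val h₁ h₂ h₃ h₁₂.ne (h₁₂.trans h₂₃).ne h₂₃.ne) h₁₂.le h₂₃ fun y hy =>
        have ⟨hyΩ, hy₁, hy₂, hy₃⟩ := mem_finset_val_sub_triple.mp hy
        (hlarge y hyΩ hy₁ hy₂ hy₃).le
end
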